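/- Define P : List Bool → Matrix (Fin 2) (Fin 2) ℤ by P([]) = identity matrix and P(b :: w) = (if b then R1 else L1) * P(w). Every 2×2 integer matrix M with nonnegative entries and nonzero determinant has a unique representation M = P(w) * N where w : List Bool and N is an orphan. (The set of all positive linear fractional transformations decomposes into a forest of pairwise disjoint rooted infinite binary trees whose roots are the orphans.) -/

import Mathlib

/-!
Left multiplication by `R1` adds the second row to the first, and left multiplication by `L1`
adds the first row to the second. Call a matrix positive if its entries are nonnegative and its
determinant is nonzero (`IsPos`). A positive matrix which is not an orphan has comparable rows, so
subtracting the smaller row from the larger one writes it as `R1 * K` or `L1 * K` with `K` positive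
(`exists_parent`). The smaller row is nonzero, so the sum of the entries drops, and iterating
reaches an orphan: this is existence.

For uniqueness, an orphan is not of the form `R1 * K` or `L1 * K` with `K` positive
(`not_isOrphan_step_mul`), and `R1 * K = L1 * K'` is impossible, since it forces the first row of
`K` to vanish (`R1_mul_ne_L1_mul`). Hence the word is determined letter by letter.
-/

def L1 : Matrix (Fin 2) (Fin 2) ℤ := !![1, 0; 1, 1]

def R1 : Matrix (Fin 2) (Fin 2) ℤ := !![1, 1; 0, 1]

/-- The matrix associated to a binary word: products of `L1` and `R1`. -/
def P : List Bool → Matrix (Fin 2) (Fin 2) ℤ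
  | [] => 1
  | b :: w => (if b then R1 else L1) * P w

/-- A nonnegative integer matrix with nonzero determinant is an orphan if
its rows are incomparable. -/
def IsOrphan (N : Matrix (Fin 2) (Fin 2) ℤ) : Prop :=
  (∀ i j, 0 ≤ N i j) ∧ N.det ≠ 0 ∧
    ((N 0 0 < N 1 0 ∧ N 1 1 < N 0 1) ∨ (N 1 0 < N 0 0 ∧ N 0 1 < N 1 1))

/-- The matrix of a letter: `R1` for `true`, `L1` for `false`. -/
def stepMat (b : Bool) : Matrix (Fin 2) (Fin 2) ℤ := if b then R1 else L1

/-- Nonnegative entries and nonzero determinant. -/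
def IsPos (M : Matrix (Fin 2) (Fin 2) ℤ) : Prop := (∀ i j, 0 ≤ M i j) ∧ M.det ≠ 0

theorem P_cons_mul (b : Bool) (w : List Bool) (N : Matrix (Fin 2) (Fin 2) ℤ) :
    P (b :: w) * N = stepMat b * (P w * N) := by
  rw [P, stepMat, Matrix.mul_assoc]

theorem R1_mul (K : Matrix (Fin 2) (Fin 2) ℤ) :
    R1 * K = !![K 0 0 + K 1 0, K 0 1 + K 1 1; K 1 0, K 1 1] := by
  ext i j
  fin_cases i <;> fin_cases j <;> simp [R1, Matrix.mul_apply, Fin.sum_univ_two]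

theorem L1_mul (K : Matrix (Fin 2) (Fin 2) ℤ) :
    L1 * K = !![K 0 0, K 0 1; K 0 0 + K 1 0, K 0 1 + K 1 1] := by
  ext i j
  fin_cases i <;> fin_cases j <;> simp [L1, Matrix.mul_apply, Fin.sum_univ_two]

theorem det_stepMat (b : Bool) : (stepMat b).det = 1 := by
  cases b <;> simp [stepMat, L1, R1, Matrix.det_fin_two]

theorem IsPos.stepMat_mul {K : Matrix (Fin 2) (Fin 2) ℤ} (hK : IsPos K) (b : Bool) :
    IsPos (stepMat b * K) := by
  refine ⟨?_, by rw [Matrix.det_mul, det_stepMat, one_mul]; exact hK.2⟩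
  have h00 := hK.1 0 0
  have h01 := hK.1 0 1
  have h10 := hK.1 1 0
  have h11 := hK.1 1 1
  intro i j
  cases b <;> fin_cases i <;> fin_cases j <;> simp [stepMat, R1_mul, L1_mul] <;> omega

theorem IsPos.P_mul {N : Matrix (Fin 2) (Fin 2) ℤ} (hN : IsPos N) (w : List Bool) :
    IsPos (P w * N) := by
  induction w with
  | nil => simpa [P] using hN
  | cons b w ih =>
    rw [P_cons_mul]
    exact ih.stepMat_mul b

theorem IsOrphan.isPos {N : Matrix (Fin 2) (Fin 2) ℤ} (h : IsOrphan N) : IsPos N :=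
  ⟨h.1, h.2.1⟩

theorem not_isOrphan_step_mul {K : Matrix (Fin 2) (Fin 2) ℤ} (hK : IsPos K) (b : Bool) :
    ¬ IsOrphan (stepMat b * K) := by
  have h00 := hK.1 0 0
  have h01 := hK.1 0 1
  have h10 := hK.1 1 0
  have h11 := hK.1 1 1
  rintro ⟨-, -, h⟩
  cases b <;> simp [stepMat, R1_mul, L1_mul] at h <;> omega

theorem R1_mul_ne_L1_mul {K K' : Matrix (Fin 2) (Fin 2) ℤ} (hK : IsPos K) (hK' : IsPos K') :
    R1 * K ≠ L1 * K' := by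
  intro h
  rw [R1_mul, L1_mul] at h
  have e00 := congrFun (congrFun h 0) 0
  have e01 := congrFun (congrFun h 0) 1
  have e10 := congrFun (congrFun h 1) 0
  have e11 := congrFun (congrFun h 1) 1
  simp at e00 e01 e10 e11
  have h00 := hK.1 0 0
  have h01 := hK.1 0 1
  have h10 := hK'.1 1 0
  have h11 := hK'.1 1 1
  have z0 : K 0 0 = 0 := by omega
  have z1 : K 0 1 = 0 := by omega
  exact hK.2 (by rw [Matrix.det_fin_two, z0, z1]; ring)

theorem step_mul_inj {K K' : Matrix (Fin 2) (Fin 2) ℤ} (hK : IsPos K) (hK' : IsPos K')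
    {b b' : Bool} (h : stepMat b * K = stepMat b' * K') : b = b' ∧ K = K' := by
  have hb : b = b' := by
    cases b <;> cases b' <;> simp only [stepMat] at h
    · rfl
    · exact absurd h.symm (R1_mul_ne_L1_mul hK' hK)
    · exact absurd h (R1_mul_ne_L1_mul hK hK')
    · rfl
  subst hb
  have hu : IsUnit (stepMat b) := by
    rw [Matrix.isUnit_iff_isUnit_det, det_stepMat]
    exact isUnit_one
  exact ⟨rfl, hu.mul_left_cancel h⟩

/-- Sum of the entries, the measure that decreases from a matrix to its parent. -/
def entrySum (M : Matrix (Fin 2) (Fin 2) ℤ) : ℤ := M 0 0 + M 0 1 + M 1 0 + M 1 1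

/-- A positive matrix that is not an orphan has a parent, with smaller entry sum. -/
theorem exists_parent {M : Matrix (Fin 2) (Fin 2) ℤ} (hM : IsPos M) (h : ¬ IsOrphan M) :
    ∃ b K, IsPos K ∧ M = stepMat b * K ∧ entrySum K < entrySum M := by
  have h00 := hM.1 0 0
  have h01 := hM.1 0 1
  have h10 := hM.1 1 0
  have h11 := hM.1 1 1
  have hd := hM.2
  rw [Matrix.det_fin_two] at hd
  have hcmp : (M 1 0 ≤ M 0 0 ∧ M 1 1 ≤ M 0 1) ∨ (M 0 0 ≤ M 1 0 ∧ M 0 1 ≤ M 1 1) := by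
    by_contra hc
    exact h ⟨hM.1, hM.2, by omega⟩
  -- both rows are nonzero because the determinant is
  have hr0 : 0 < M 0 0 + M 0 1 := by
    by_contra hc
    have z0 : M 0 0 = 0 := by omega
    have z1 : M 0 1 = 0 := by omega
    exact hd (by rw [z0, z1]; ring)
  have hr1 : 0 < M 1 0 + M 1 1 := by
    by_contra hc
    have z0 : M 1 0 = 0 := by omega
    have z1 : M 1 1 = 0 := by omega
    exact hd (by rw [z0, z1]; ring)
  rcases hcmp with ⟨ha, hb⟩ | ⟨ha, hb⟩
  · refine ⟨true, !![M 0 0 - M 1 0, M 0 1 - M 1 1; M 1 0, M 1 1], ⟨?_, ?_⟩, ?_, ?_⟩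
    · intro i j
      fin_cases i <;> fin_cases j <;> simp <;> omega
    · rw [Matrix.det_fin_two_of]
      intro hz
      exact hd (by linear_combination hz)
    · ext i j
      fin_cases i <;> fin_cases j <;> simp [stepMat, R1_mul]
    · simp [entrySum]
      omega
  · refine ⟨false, !![M 0 0, M 0 1; M 1 0 - M 0 0, M 1 1 - M 0 1], ⟨?_, ?_⟩, ?_, ?_⟩
    · intro i j
      fin_cases i <;> fin_cases j <;> simp <;> omega
    · rw [Matrix.det_fin_two_of]
      intro hz
      exact hd (by linear_combination hz)
    · ext i j
      fin_cases i <;> fin_cases j <;> simp [stepMat, L1_mul]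
    · simp [entrySum]
      omega

theorem exists_decomposition (n : ℕ) : ∀ M : Matrix (Fin 2) (Fin 2) ℤ, IsPos M →
    entrySum M < n → ∃ w N, IsOrphan N ∧ M = P w * N := by
  induction n with
  | zero =>
    intro M hM hn
    have h00 := hM.1 0 0
    have h01 := hM.1 0 1
    have h10 := hM.1 1 0
    have h11 := hM.1 1 1
    simp only [entrySum] at hn
    omega
  | succ n ih =>
    intro M hM hn
    by_cases h : IsOrphan M
    · exact ⟨[], M, h, by simp [P]⟩
    · obtain ⟨b, K, hK, hMK, hlt⟩ := exists_parent hM h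
      obtain ⟨w, N, hN, hKN⟩ := ih K hK (by push_cast at hn; omega)
      exact ⟨b :: w, N, hN, by rw [P_cons_mul, ← hKN, hMK]⟩

theorem decomposition_unique {N N' : Matrix (Fin 2) (Fin 2) ℤ} (hN : IsOrphan N)
    (hN' : IsOrphan N') : ∀ w w' : List Bool, P w * N = P w' * N' → w = w' ∧ N = N'
  | [], [], h => ⟨rfl, by simpa [P] using h⟩
  | [], b :: w', h => by
    rw [P_cons_mul, P, one_mul] at h
    exact absurd (h ▸ hN) (not_isOrphan_step_mul (hN'.isPos.P_mul w') b)
  | b :: w, [], h => by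
    rw [P_cons_mul, P, one_mul] at h
    exact absurd (h ▸ hN') (not_isOrphan_step_mul (hN.isPos.P_mul w) b)
  | b :: w, b' :: w', h => by
    rw [P_cons_mul, P_cons_mul] at h
    obtain ⟨hb, hK⟩ := step_mul_inj (hN.isPos.P_mul w) (hN'.isPos.P_mul w') h
    obtain ⟨hw, hNN⟩ := decomposition_unique hN hN' w w' hK
    exact ⟨by rw [hb, hw], hNN⟩

theorem forest_decomposition (M : Matrix (Fin 2) (Fin 2) ℤ)
    (hpos : ∀ i j, 0 ≤ M i j) (hdet : M.det ≠ 0) :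
    ∃! p : List Bool × Matrix (Fin 2) (Fin 2) ℤ, IsOrphan p.2 ∧ M = P p.1 * p.2 := by
  obtain ⟨w, N, hN, h⟩ :=
    exists_decomposition ((entrySum M).toNat + 1) M ⟨hpos, hdet⟩ (by push_cast; omega)
  refine ⟨(w, N), ⟨hN, h⟩, ?_⟩
  rintro ⟨w', N'⟩ ⟨hN', h'⟩
  obtain ⟨hw, hNN⟩ := decomposition_unique hN' hN w' w (h'.symm.trans h)
  exact Prod.ext hw hNN
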